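/- arXiv:2007.14740 — 10 statements merged into one kernel-verified Lean document; each statement's English description precedes it below -/
import Mathlib

section
/- A binary matrix x ∈ {0,1}^{r×r} (with x_{ii} = 0) satisfies the assignment constraints together with the Dantzig–Fulkerson–Johnson subtour elimination constraints Σ_{i∈S} Σ_{j∈S, j≠i} x_{ij} ≤ |S| − 1 for every subset S ⊆ {1,…,r} with 2 ≤ |S| ≤ r − 2, if and only if x is the incidence vector of a tour on {1,…,r}. -/
/-- A tour on the node set `Fin r`: a permutation consisting of a single cycle
through all `r` nodes. -/
def IsTour {r : ℕ} (σ : Equiv.Perm (Fin r)) : Prop :=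
  σ.IsCycle ∧ ∀ i, σ i ≠ i

/-- The incidence vector of a tour `σ`: `x i j = 1` iff `j = σ i`. -/
def incidence {r : ℕ} (σ : Equiv.Perm (Fin r)) (i j : Fin r) : ℝ :=
  if σ i = j then 1 else 0

theorem exists_unit_of_sum {r : ℕ} (f : Fin r → ℝ) (hb : ∀ j, f j = 0 ∨ f j = 1)
    (hs : ∑ j, f j = 1) : ∃ a, ∀ j, f j = if a = j then 1 else 0 := by
  have h1 : ∃ a, f a = 1 := by
    by_contra hn
    push Not at hn
    have : ∑ j, f j = 0 := Finset.sum_eq_zero fun j _ => (hb j).resolve_right (hn j)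
    linarith
  obtain ⟨a, ha⟩ := h1
  refine ⟨a, fun j => ?_⟩
  split_ifs with h
  · rw [← h, ha]
  · rw [← Finset.add_sum_erase _ _ (Finset.mem_univ a), ha] at hs
    have h0 : ∑ j ∈ Finset.univ.erase a, f j = 0 := by linarith
    rw [Finset.sum_eq_zero_iff_of_nonneg] at h0
    · exact h0 j (by simp [Ne.symm h])
    · intro i _
      rcases hb i with h | h <;> simp [h]

/-- A binary matrix with zero diagonal satisfying the assignment constraints
together with the Dantzig–Fulkerson–Johnson subtour elimination constraints
(for every subset `S` with `2 ≤ |S| ≤ r − 2`) is exactly the incidence vector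
of a tour on `{1,…,r}`. -/
theorem dfj_characterizes_tours (r : ℕ) (hr : 3 ≤ r)
    (x : Fin r → Fin r → ℝ)
    (hbin : ∀ i j, x i j = 0 ∨ x i j = 1)
    (hdiag : ∀ i, x i i = 0) :
    ((∀ j : Fin r, ∑ i ∈ Finset.univ.erase j, x i j = 1) ∧
     (∀ i : Fin r, ∑ j ∈ Finset.univ.erase i, x i j = 1) ∧
     (∀ S : Finset (Fin r), 2 ≤ S.card → S.card ≤ r - 2 →
        ∑ i ∈ S, ∑ j ∈ S.erase i, x i j ≤ (S.card : ℝ) - 1)) ↔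
    (∃ σ : Equiv.Perm (Fin r), IsTour σ ∧ ∀ i j, x i j = incidence σ i j) := by
  have hrow : ∀ (S : Finset (Fin r)) i, ∑ j ∈ S.erase i, x i j = ∑ j ∈ S, x i j :=
    fun S i => Finset.sum_erase _ (hdiag i)
  have hcol : ∀ (S : Finset (Fin r)) j, ∑ i ∈ S.erase j, x i j = ∑ i ∈ S, x i j :=
    fun S j => Finset.sum_erase _ (hdiag j)
  simp only [hrow, hcol]
  constructor
  · rintro ⟨hc, hR, hS⟩
    choose f hf using fun i => exists_unit_of_sum (x i) (hbin i) (hR i)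
    choose g hg using fun j => exists_unit_of_sum (fun i => x i j) (fun i => hbin i j) (hc j)
    have hfg : ∀ i, g (f i) = i := by
      intro i
      have h1 := hf i (f i)
      have h2 := hg (f i) i
      by_contra hne
      simp [hne] at h1 h2
      linarith
    have hinj : Function.Injective f := fun a b hab => by rw [← hfg a, hab, hfg b]
    let σ : Equiv.Perm (Fin r) := Equiv.ofBijective f (Finite.injective_iff_bijective.mp hinj)
    have hσ : ∀ i, σ i = f i := fun i => rfl
    have hx : ∀ i j, x i j = if σ i = j then 1 else 0 := fun i j => by rw [hσ, hf]
    have hfix : ∀ i, σ i ≠ i := by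
      intro i h
      have h1 := hx i i
      rw [hdiag, if_pos h] at h1
      exact zero_ne_one h1
    refine ⟨σ, ⟨?_, hfix⟩, hx⟩
    let i₀ : Fin r := ⟨0, by omega⟩
    refine ⟨i₀, hfix i₀, fun j _ => ?_⟩
    by_contra hj
    classical
    let S : Finset (Fin r) := Finset.univ.filter (fun k => σ.SameCycle i₀ k)
    have hm : ∀ k, k ∈ S ↔ σ.SameCycle i₀ k := fun k => by simp [S]
    have hcl : ∀ k, σ k ∈ S ↔ k ∈ S := fun k => by
      rw [hm, hm, Equiv.Perm.sameCycle_apply_right]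
    have hi : i₀ ∈ S := (hm _).2 (Equiv.Perm.SameCycle.refl _ _)
    have h2 : 2 ≤ S.card :=
      Finset.one_lt_card.2 ⟨_, (hcl i₀).2 hi, _, hi, hfix i₀⟩
    have hjS : j ∉ S := fun h => hj ((hm j).1 h)
    have h3 : 2 ≤ Sᶜ.card :=
      Finset.one_lt_card.2 ⟨σ j, by simpa [hcl] using hjS, j, by simpa using hjS, hfix j⟩
    have h4 := S.card_add_card_compl
    rw [Fintype.card_fin] at h4
    have h5 := hS S h2 (by omega)
    have h6 : ∑ i ∈ S, ∑ j ∈ S, x i j = (S.card : ℝ) := by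
      rw [Finset.card_eq_sum_ones]
      push_cast
      refine Finset.sum_congr rfl fun k hk => ?_
      simp [hx, (hcl k).2 hk]
    linarith
  · rintro ⟨σ, ⟨hcyc, hfix⟩, hx⟩
    have hx' : ∀ i j, x i j = if σ i = j then 1 else 0 := hx
    refine ⟨fun j => ?_, fun i => ?_, fun S h2 hle => ?_⟩
    · simp only [hx', ← Equiv.eq_symm_apply]
      simp
    · simp [hx']
    · have hex : ∃ i ∈ S, σ i ∉ S := by
        by_contra hn
        push Not at hn
        obtain ⟨a, ha⟩ : S.Nonempty := Finset.card_pos.1 (by omega)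
        have hpow : ∀ n : ℕ, (σ ^ n) a ∈ S := by
          intro n
          induction n with
          | zero => simpa using ha
          | succ n ih => rw [pow_succ', Equiv.Perm.mul_apply]; exact hn _ ih
        have : S = Finset.univ := by
          ext b
          simp only [Finset.mem_univ, iff_true]
          obtain ⟨n, rfl⟩ := hcyc.exists_pow_eq (hfix a) (hfix b)
          exact hpow n
        rw [this, Finset.card_univ, Fintype.card_fin] at hle
        omega
      obtain ⟨a, ha, hna⟩ := hex
      have h0 : ∑ j ∈ S, x a j = 0 := by simp [hx', hna]
      rw [← Finset.add_sum_erase _ _ ha, h0, zero_add]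
      calc ∑ i ∈ S.erase a, ∑ j ∈ S, x i j ≤ ∑ i ∈ S.erase a, (1 : ℝ) := by
            refine Finset.sum_le_sum fun i _ => ?_
            simp only [hx', Finset.sum_ite_eq]
            split_ifs <;> norm_num
        _ = (S.card : ℝ) - 1 := by
            rw [Finset.sum_const, nsmul_eq_mul, mul_one, Finset.card_erase_of_mem ha,
              Nat.cast_sub (by omega), Nat.cast_one]
end

section
/- A binary matrix x ∈ {0,1}^{r×r} (with x_{ii} = 0) satisfying the assignment constraints is the incidence vector of a tour on {1,…,r} if and only if there exist real numbers u_2,…,u_r such that the Miller–Tucker–Zemlin inequalities u_i − u_j + r·x_{ij} ≤ r − 1 hold for all distinct i, j ∈ {2,…,r}. -/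
/-- A binary matrix with zero diagonal satisfying the assignment constraints is
the incidence vector of a tour iff there exist reals `u_2, …, u_r` satisfying
the Miller–Tucker–Zemlin inequalities `u i − u j + r·x i j ≤ r − 1` for all
distinct `i, j ∈ {2, …, r}` (node `1` is index `0`). -/
theorem mtz_characterizes_tours (r : ℕ) [NeZero r] (hr : 3 ≤ r)
    (x : Fin r → Fin r → ℝ)
    (hbin : ∀ i j, x i j = 0 ∨ x i j = 1)
    (hdiag : ∀ i, x i i = 0)
    (hassign₁ : ∀ j : Fin r, ∑ i ∈ Finset.univ.erase j, x i j = 1)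
    (hassign₂ : ∀ i : Fin r, ∑ j ∈ Finset.univ.erase i, x i j = 1) :
    (∃ σ : Equiv.Perm (Fin r), IsTour σ ∧ ∀ i j, x i j = incidence σ i j) ↔
    (∃ u : Fin r → ℝ, ∀ i j : Fin r, i ≠ 0 → j ≠ 0 → i ≠ j →
      u i - u j + (r : ℝ) * x i j ≤ (r : ℝ) - 1) := by
  classical
  constructor
  · rintro ⟨σ, ⟨hc, hf⟩, hx⟩
    have hsame : ∀ i, ∃ k : ℕ, k < r ∧ (σ ^ k) 0 = i := by
      intro i
      have h1 : σ.SameCycle 0 i := hc.sameCycle (hf 0) (hf i)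
      obtain ⟨k, hk, hk'⟩ := h1.exists_pow_eq'
      refine ⟨k, lt_of_lt_of_le hk ?_, hk'⟩
      rw [hc.orderOf]
      simpa using Finset.card_le_univ σ.support
    have hex : ∀ i, ∃ k : ℕ, (σ ^ k) 0 = i := fun i => (hsame i).imp fun k h => h.2
    refine ⟨fun i => (Nat.find (hex i) : ℝ), ?_⟩
    intro i j hi hj hij
    rw [hx, incidence]
    split_ifs with h
    · have hs := Nat.find_spec (hex j)
      have hlt : Nat.find (hex i) + 1 ≤ Nat.find (hex j) := by
        rcases hk : Nat.find (hex j) with _ | k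
        · rw [hk] at hs
          exact absurd (by simpa using hs.symm : j = 0) hj
        · rw [hk, pow_succ', Equiv.Perm.mul_apply, ← h] at hs
          have := Nat.find_min' (hex i) (σ.injective hs)
          omega
      have : ((Nat.find (hex i) : ℝ)) + 1 ≤ (Nat.find (hex j) : ℝ) := by exact_mod_cast hlt
      linarith
    · obtain ⟨k, hk, hk'⟩ := hsame i
      have h1 : Nat.find (hex i) + 1 ≤ r := by
        have := Nat.find_min' (hex i) hk'
        omega
      have h2 : (Nat.find (hex i) : ℝ) + 1 ≤ r := by exact_mod_cast h1
      have h3 : (0 : ℝ) ≤ Nat.find (hex j) := Nat.cast_nonneg _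
      linarith
  · rintro ⟨u, hu⟩
    have hnn : ∀ i j, 0 ≤ x i j := by
      intro i j
      rcases hbin i j with h | h <;> rw [h] <;> norm_num
    have hne : ∀ i j, x i j = 1 → i ≠ j := by
      rintro i j h rfl
      rw [hdiag] at h
      norm_num at h
    have hex : ∀ i, ∃ j, x i j = 1 := by
      intro i
      by_contra! h
      have := hassign₂ i
      rw [Finset.sum_eq_zero fun j _ => (hbin i j).resolve_right (h j)] at this
      norm_num at this
    choose f hf using hex
    have hcol : ∀ a b j, x a j = 1 → x b j = 1 → a = b := by
      intro a b j ha hb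
      by_contra hab
      have h := Finset.add_le_sum (s := Finset.univ.erase j) (f := fun i => x i j)
        (fun i _ => hnn i j) (Finset.mem_erase.2 ⟨hne a j ha, Finset.mem_univ _⟩)
        (Finset.mem_erase.2 ⟨hne b j hb, Finset.mem_univ _⟩) hab
      simp only [ha, hb, hassign₁] at h
      norm_num at h
    have hrow : ∀ i a b, x i a = 1 → x i b = 1 → a = b := by
      intro i a b ha hb
      by_contra hab
      have h := Finset.add_le_sum (s := Finset.univ.erase i) (f := fun j => x i j)
        (fun j _ => hnn i j) (Finset.mem_erase.2 ⟨(hne i a ha).symm, Finset.mem_univ _⟩)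
        (Finset.mem_erase.2 ⟨(hne i b hb).symm, Finset.mem_univ _⟩) hab
      simp only [ha, hb, hassign₂] at h
      norm_num at h
    have hinj : Function.Injective f := by
      intro a b hab
      exact hcol a b (f a) (hf a) (hab ▸ hf b)
    let σ : Equiv.Perm (Fin r) := Equiv.ofBijective f (Finite.injective_iff_bijective.1 hinj)
    have hσ : ∀ i, x i (σ i) = 1 := hf
    have hσne : ∀ i, σ i ≠ i := fun i => (hne _ _ (hσ i)).symm
    have hreach : ∀ i, σ.SameCycle 0 i := by
      intro i
      by_contra hns
      have hk0 : ∀ k : ℕ, (σ ^ k) i ≠ 0 := by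
        intro k hk
        exact hns (Equiv.Perm.SameCycle.symm ⟨k, by simpa using hk⟩)
      have hgrow : ∀ k : ℕ, u i + k ≤ u ((σ ^ k) i) := by
        intro k
        induction k with
        | zero => simp
        | succ k ih =>
          have h0 := hk0 (k + 1)
          rw [pow_succ', Equiv.Perm.mul_apply] at h0 ⊢
          have := hu _ _ (hk0 k) h0 (hσne _).symm
          rw [hσ] at this
          rw [Nat.cast_succ]
          linarith
      have h := hgrow (orderOf σ)
      rw [pow_orderOf_eq_one] at h
      have hp : (0 : ℝ) < orderOf σ := by exact_mod_cast orderOf_pos σ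
      simp only [Equiv.Perm.one_apply] at h
      linarith
    refine ⟨σ, ⟨⟨0, hσne 0, fun y _ => hreach y⟩, hσne⟩, ?_⟩
    intro i j
    rw [incidence]
    split_ifs with h
    · rw [← h]; exact hσ i
    · exact (hbin i j).resolve_right fun h1 => h (hrow i _ _ (hσ i) h1)
end

section
/- For every tour σ on {1,…,r} with incidence vector x and positions u, the Desrochers–Laporte inequalities u_i − u_j + (r−1)·x_{ij} − (r−3)·x_{ji} ≤ r − 2 hold for all distinct i, j ∈ {2,…,r}. -/
/-- `u` gives the positions of the nodes along the tour `σ`: `u i` is the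
(unique) integer in `{1, …, r}` with `σ^(u i − 1) 1 = i` (node `1` is index `0`). -/
def IsPositions {r : ℕ} [NeZero r] (σ : Equiv.Perm (Fin r)) (u : Fin r → ℕ) : Prop :=
  ∀ i, 1 ≤ u i ∧ u i ≤ r ∧ (σ ^ (u i - 1)) (0 : Fin r) = i

theorem positions_pow {r : ℕ} [NeZero r] (σ : Equiv.Perm (Fin r))
    (u : Fin r → ℕ) (hu : IsPositions σ u) (k : ℕ) (hk : k < r) :
    u ((σ ^ k) 0) = k + 1 := by
  have hinj : Function.Injective (fun i : Fin r => (⟨u i - 1, by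
      have := hu i; omega⟩ : Fin r)) := by
    intro a b hab
    have h : u a - 1 = u b - 1 := by simpa using hab
    rw [← (hu a).2.2, ← (hu b).2.2, h]
  obtain ⟨i, hi⟩ := (Finite.surjective_of_injective hinj) ⟨k, hk⟩
  have h : u i - 1 = k := by simpa using hi
  have h3 := (hu i).2.2
  have h1 := (hu i).1
  rw [h] at h3
  rw [h3]
  omega

theorem positions_succ {r : ℕ} [NeZero r] (σ : Equiv.Perm (Fin r))
    (u : Fin r → ℕ) (hu : IsPositions σ u) (i : Fin r) (h0 : σ i ≠ 0) :
    u (σ i) = u i + 1 := by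
  obtain ⟨h1, h2, h3⟩ := hu i
  obtain ⟨g1, g2, g3⟩ := hu (σ i)
  have hm : u (σ i) ≠ 1 := by
    intro h
    rw [h] at g3
    exact h0 (by simpa using g3.symm)
  obtain ⟨m, hm'⟩ : ∃ m, u (σ i) - 1 = m + 1 := ⟨u (σ i) - 2, by omega⟩
  rw [hm', pow_succ', Equiv.Perm.mul_apply] at g3
  have h := σ.injective g3
  have h4 := positions_pow σ u hu m (by omega)
  rw [h] at h4
  omega

/-- For every tour with incidence vector `x` and positions `u`, the
Desrochers–Laporte inequalities
`u i − u j + (r−1)·x i j − (r−3)·x j i ≤ r − 2` hold for all distinct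
`i, j ∈ {2, …, r}`. -/
theorem desrochers_laporte_valid (r : ℕ) [NeZero r] (hr : 3 ≤ r)
    (σ : Equiv.Perm (Fin r)) (hσ : IsTour σ)
    (u : Fin r → ℕ) (hu : IsPositions σ u)
    (i j : Fin r) (hi : i ≠ 0) (hj : j ≠ 0) (hij : i ≠ j) :
    (u i : ℝ) - (u j : ℝ) + ((r : ℝ) - 1) * incidence σ i j
      - ((r : ℝ) - 3) * incidence σ j i ≤ (r : ℝ) - 2 := by
  have u0 : u 0 = 1 := by
    have := positions_pow σ u hu 0 (by omega)
    simpa using this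
  have hne : ∀ a b, a ≠ b → u a ≠ u b := by
    intro a b hab h
    apply hab
    rw [← (hu a).2.2, ← (hu b).2.2, h]
  have hi1 : 2 ≤ u i := by
    have := hne i 0 hi
    have := (hu i).1
    omega
  have hj1 : 2 ≤ u j := by
    have := hne j 0 hj
    have := (hu j).1
    omega
  have hi2 : (u i : ℝ) ≤ r := by exact_mod_cast (hu i).2.1
  have hj2 : (2 : ℝ) ≤ u j := by exact_mod_cast hj1
  have hr' : (3 : ℝ) ≤ r := by exact_mod_cast hr
  unfold incidence
  by_cases h1 : σ i = j
  · have e1 : u j = u i + 1 := by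
      have := positions_succ σ u hu i (by rw [h1]; exact hj)
      rwa [h1] at this
    have h2 : σ j ≠ i := by
      intro h2
      have := positions_succ σ u hu j (by rw [h2]; exact hi)
      rw [h2] at this
      omega
    have e1' : (u j : ℝ) = u i + 1 := by exact_mod_cast e1
    rw [if_pos h1, if_neg h2]
    linarith
  · by_cases h2 : σ j = i
    · have e1 : u i = u j + 1 := by
        have := positions_succ σ u hu j (by rw [h2]; exact hi)
        rwa [h2] at this
      have e1' : (u i : ℝ) = u j + 1 := by exact_mod_cast e1
      rw [if_neg h1, if_pos h2]
      linarith
    · rw [if_neg h1, if_neg h2]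
      linarith
end

section
/- A binary matrix x ∈ {0,1}^{r×r} (with x_{ii} = 0) satisfying the assignment constraints is the incidence vector of a tour on {1,…,r} if and only if there exist real numbers y_{ij} ≥ 0 (for i ≠ j) such that y_{ij} ≤ (r−1)·x_{ij} for all i ≠ j, the net flow out of node 1 satisfies Σ_{j≠1} y_{1j} − Σ_{j≠1} y_{j1} = r − 1, and every node i ∈ {2,…,r} has net inflow Σ_{j≠i} y_{ji} − Σ_{j≠i} y_{ij} = 1 (the single-commodity flow formulation of Gavish and Graves). -/
lemma exists_unique_entry_one {ι : Type*} [DecidableEq ι] (s : Finset ι) (f : ι → ℝ)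
    (hb : ∀ i, f i = 0 ∨ f i = 1) (hs : ∑ i ∈ s, f i = 1) :
    ∃ a ∈ s, f a = 1 ∧ ∀ b ∈ s, f b = 1 → b = a := by
  have h0 : ∃ a ∈ s, f a = 1 := by
    by_contra hcon
    push Not at hcon
    have : ∑ i ∈ s, f i = 0 := Finset.sum_eq_zero fun i hi => (hb i).resolve_right (hcon i hi)
    linarith
  obtain ⟨a, ha, hfa⟩ := h0
  refine ⟨a, ha, hfa, fun b hbs hfb => ?_⟩
  by_contra hne
  have hle : ∑ i ∈ ({a, b} : Finset ι), f i ≤ ∑ i ∈ s, f i := by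
    apply Finset.sum_le_sum_of_subset_of_nonneg
    · intro c hc
      simp only [Finset.mem_insert, Finset.mem_singleton] at hc
      rcases hc with rfl | rfl <;> assumption
    · intro i _ _
      rcases hb i with h | h <;> rw [h] <;> norm_num
  rw [Finset.sum_pair (Ne.symm hne)] at hle
  linarith

lemma row_sum {r : ℕ} (σ : Equiv.Perm (Fin r)) (hσ : ∀ i, σ i ≠ i) (y : Fin r → Fin r → ℝ)
    (hy : ∀ i j, i ≠ j → σ i ≠ j → y i j = 0) (i : Fin r) :
    ∑ j ∈ Finset.univ.erase i, y i j = y i (σ i) := by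
  apply Finset.sum_eq_single_of_mem
  · simp [hσ i]
  · intro j hj hne
    exact hy i j (Finset.ne_of_mem_erase hj).symm hne.symm

lemma col_sum {r : ℕ} (σ : Equiv.Perm (Fin r)) (hσ : ∀ i, σ i ≠ i) (y : Fin r → Fin r → ℝ)
    (hy : ∀ i j, i ≠ j → σ i ≠ j → y i j = 0) (i : Fin r) :
    ∑ j ∈ Finset.univ.erase i, y j i = y (σ.symm i) (σ (σ.symm i)) := by
  rw [Equiv.apply_symm_apply]
  apply Finset.sum_eq_single_of_mem (f := fun j => y j i)
  · simp only [Finset.mem_erase, Finset.mem_univ, and_true]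
    intro h
    apply hσ (σ.symm i)
    rw [Equiv.apply_symm_apply, h]
  · intro j hj hne
    apply hy j i (Finset.ne_of_mem_erase hj)
    intro h
    apply hne
    rw [← h, Equiv.symm_apply_apply]

lemma exists_perm {r : ℕ} (x : Fin r → Fin r → ℝ)
    (hbin : ∀ i j, x i j = 0 ∨ x i j = 1)
    (hassign₁ : ∀ j : Fin r, ∑ i ∈ Finset.univ.erase j, x i j = 1)
    (hassign₂ : ∀ i : Fin r, ∑ j ∈ Finset.univ.erase i, x i j = 1)
    (hdiag : ∀ i, x i i = 0) :
    ∃ σ : Equiv.Perm (Fin r), (∀ i, σ i ≠ i) ∧ ∀ i j, x i j = incidence σ i j := by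
  choose f hf hf1 hfu using fun i => exists_unique_entry_one _ (x i) (hbin i) (hassign₂ i)
  have hne : ∀ i j, x i j = 1 → j ≠ i := by
    rintro i j h rfl
    rw [hdiag] at h
    norm_num at h
  have hinj : Function.Injective f := by
    intro a b hab
    obtain ⟨c, _, _, hc⟩ := exists_unique_entry_one _ (fun i => x i (f a)) (fun i => hbin i _) (hassign₁ (f a))
    have hb1 : x b (f a) = 1 := hab ▸ hf1 b
    rw [hc a (by simpa using (hne _ _ (hf1 a)).symm) (hf1 a),
      hc b (by simpa using (hne _ _ hb1).symm) hb1]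
  refine ⟨Equiv.ofBijective f (Finite.injective_iff_bijective.mp hinj), fun i => ?_, fun i j => ?_⟩
  · exact hne _ _ (hf1 i)
  · unfold incidence
    simp only [Equiv.ofBijective_apply]
    split_ifs with h
    · rw [← h]; exact hf1 i
    · refine (hbin i j).resolve_right fun h1 => h ?_
      exact (hfu i j (by simpa using hne _ _ h1) h1).symm

lemma flow_of_tour {r : ℕ} [NeZero r] (σ : Equiv.Perm (Fin r)) (h : IsTour σ) :
    ∃ g : Fin r → ℝ, (∀ i, 0 ≤ g i) ∧ (∀ i, g i ≤ (r : ℝ) - 1) ∧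
      (g 0 - g (σ.symm 0) = (r : ℝ) - 1) ∧ ∀ i, i ≠ 0 → g (σ.symm i) - g i = 1 := by
  obtain ⟨hc, hfix⟩ := h
  have hex : ∀ i, ∃ k < r, (σ ^ k) 0 = i := by
    intro i
    obtain ⟨k, hk, hk'⟩ := (hc.sameCycle (hfix 0) (hfix i)).exists_pow_eq'
    refine ⟨k, hk.trans_le ?_, hk'⟩
    rw [hc.orderOf]
    exact (Finset.card_le_univ σ.support).trans_eq (Fintype.card_fin r)
  have hex' : ∀ i, ∃ k, (σ ^ k) 0 = i := fun i => (hex i).imp fun k hk => hk.2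
  let k : Fin r → ℕ := fun i => Nat.find (hex' i)
  have hk : ∀ i, (σ ^ (k i)) 0 = i := fun i => Nat.find_spec (hex' i)
  have hmin : ∀ i m, (σ ^ m) 0 = i → k i ≤ m := fun i m hm => Nat.find_min' (hex' i) hm
  have hlt : ∀ i, k i < r := by
    intro i
    obtain ⟨m, hm, hm'⟩ := hex i
    exact (hmin i m hm').trans_lt hm
  have hstep : ∀ i, i ≠ 0 → k i = k (σ.symm i) + 1 := by
    intro i hi
    apply le_antisymm
    · apply hmin
      rw [pow_succ', Equiv.Perm.mul_apply, hk, Equiv.apply_symm_apply]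
    · have hpos : k i ≠ 0 := by
        intro h0
        have := hk i
        rw [h0] at this
        exact hi (by simpa using this.symm)
      obtain ⟨m, hm⟩ := Nat.exists_eq_succ_of_ne_zero hpos
      have h1 := hk i
      rw [hm, Nat.succ_eq_add_one, pow_succ', Equiv.Perm.mul_apply] at h1
      have h2 : (σ ^ m) 0 = σ.symm i := by rw [← h1, Equiv.symm_apply_apply]
      have := hmin _ _ h2
      omega
  have hg : ∀ i, i ≠ 0 → ((r : ℝ) - 1 - k (σ.symm i)) - ((r : ℝ) - 1 - k i) = 1 := by
    intro i hi
    rw [hstep i hi]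
    push_cast
    ring
  refine ⟨fun i => (r : ℝ) - 1 - k i, fun i => ?_, fun i => ?_, ?_, hg⟩
  · have : ((k i + 1 : ℕ) : ℝ) ≤ r := by exact_mod_cast hlt i
    push_cast at this
    linarith
  · have : (0 : ℝ) ≤ k i := Nat.cast_nonneg _
    linarith
  · have htot : ∑ i, (((r : ℝ) - 1 - k (σ.symm i)) - ((r : ℝ) - 1 - k i)) = 0 := by
      rw [Finset.sum_sub_distrib, Equiv.sum_comp σ.symm (fun i => (r : ℝ) - 1 - k i), sub_self]
    rw [← Finset.add_sum_erase _ _ (Finset.mem_univ (0 : Fin r)),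
      Finset.sum_congr rfl (fun i hi => hg i (Finset.ne_of_mem_erase hi))] at htot
    have hr1 : 1 ≤ r := Nat.one_le_iff_ne_zero.mpr (NeZero.ne r)
    simp [Finset.card_erase_of_mem, Nat.cast_sub hr1] at htot
    simp only
    linarith

lemma tour_of_flow {r : ℕ} [NeZero r] (σ : Equiv.Perm (Fin r)) (hfix : ∀ i, σ i ≠ i)
    (g : Fin r → ℝ) (hg : ∀ i, i ≠ 0 → g (σ.symm i) - g i = 1) : IsTour σ := by
  have key : ∀ i, σ.SameCycle 0 i := by
    intro i
    by_contra hcon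
    have hne : ∀ m : ℕ, (σ ^ m) i ≠ 0 := by
      intro m hm
      exact hcon (Equiv.Perm.SameCycle.symm ⟨m, by simpa using hm⟩)
    have hdec : ∀ m : ℕ, g ((σ ^ m) i) = g i - m := by
      intro m
      induction m with
      | zero => simp
      | succ m ih =>
        have h1 := hg _ (hne (m + 1))
        have h2 : σ.symm ((σ ^ (m + 1)) i) = (σ ^ m) i := by
          rw [pow_succ', Equiv.Perm.mul_apply, Equiv.symm_apply_apply]
        rw [h2, ih] at h1
        rw [Nat.cast_succ]
        linarith
    have h1 := hdec (orderOf σ)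
    rw [pow_orderOf_eq_one] at h1
    have h2 : (0 : ℝ) < orderOf σ := by exact_mod_cast orderOf_pos σ
    simp only [Equiv.Perm.one_apply] at h1
    linarith
  exact ⟨⟨0, hfix 0, fun i _ => key i⟩, hfix⟩

/-- A binary matrix with zero diagonal satisfying the assignment constraints is
the incidence vector of a tour iff there exists a nonnegative flow `y` with
`y i j ≤ (r−1)·x i j`, net flow `r − 1` out of node `1` (index `0`), and net
inflow `1` at every other node (the single-commodity flow formulation of
Gavish and Graves). -/
theorem single_commodity_flow_characterizes_tours (r : ℕ) [NeZero r] (hr : 3 ≤ r)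
    (x : Fin r → Fin r → ℝ)
    (hbin : ∀ i j, x i j = 0 ∨ x i j = 1)
    (hdiag : ∀ i, x i i = 0)
    (hassign₁ : ∀ j : Fin r, ∑ i ∈ Finset.univ.erase j, x i j = 1)
    (hassign₂ : ∀ i : Fin r, ∑ j ∈ Finset.univ.erase i, x i j = 1) :
    (∃ σ : Equiv.Perm (Fin r), IsTour σ ∧ ∀ i j, x i j = incidence σ i j) ↔
    (∃ y : Fin r → Fin r → ℝ,
      (∀ i j : Fin r, i ≠ j → 0 ≤ y i j) ∧
      (∀ i j : Fin r, i ≠ j → y i j ≤ ((r : ℝ) - 1) * x i j) ∧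
      ((∑ j ∈ Finset.univ.erase (0 : Fin r), y 0 j) -
        (∑ j ∈ Finset.univ.erase (0 : Fin r), y j 0) = (r : ℝ) - 1) ∧
      (∀ i : Fin r, i ≠ 0 →
        (∑ j ∈ Finset.univ.erase i, y j i) -
          (∑ j ∈ Finset.univ.erase i, y i j) = 1)) := by
  constructor
  · rintro ⟨σ, hσ, hx⟩
    obtain ⟨g, hg0, hg1, hgr, hgi⟩ := flow_of_tour σ hσ
    let y : Fin r → Fin r → ℝ := fun i j => if σ i = j then g i else 0
    have hy : ∀ i j, i ≠ j → σ i ≠ j → y i j = 0 := fun i j _ h => if_neg h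
    have hyσ : ∀ i, y i (σ i) = g i := fun i => if_pos rfl
    refine ⟨y, fun i j _ => ?_, fun i j _ => ?_, ?_, fun i hi => ?_⟩
    · simp only [y]
      split_ifs
      exacts [hg0 i, le_rfl]
    · rw [hx]
      simp only [y, incidence]
      split_ifs
      · simpa using hg1 i
      · simp
    · rw [row_sum σ hσ.2 y hy, col_sum σ hσ.2 y hy, hyσ, hyσ]
      exact hgr
    · rw [row_sum σ hσ.2 y hy, col_sum σ hσ.2 y hy, hyσ, hyσ]
      exact hgi i hi
  · rintro ⟨y, hy0, hy1, _, hyi⟩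
    obtain ⟨σ, hfix, hx⟩ := exists_perm x hbin hassign₁ hassign₂ hdiag
    refine ⟨σ, ?_, hx⟩
    have hy : ∀ i j, i ≠ j → σ i ≠ j → y i j = 0 := by
      intro i j hij h
      have h1 := hy1 i j hij
      rw [hx, incidence, if_neg h, mul_zero] at h1
      exact le_antisymm h1 (hy0 i j hij)
    refine tour_of_flow σ hfix (fun i => y i (σ i)) fun i hi => ?_
    have := hyi i hi
    rwa [row_sum σ hfix y hy, col_sum σ hfix y hy] at this
end

section
/- A binary matrix x ∈ {0,1}^{r×r} (with x_{ii} = 0) satisfying the assignment constraints is the incidence vector of a tour on {1,…,r} if and only if there exist real numbers y_{ij} ≥ 0 and z_{ij} ≥ 0 (for i ≠ j) such that: Σ_{j≠1}(y_{1j} − y_{j1}) = r − 1; Σ_{j≠1}(z_{1j} − z_{j1}) = −(r − 1); Σ_{j≠i}(y_{ij} − y_{ji}) = −1 for every i ∈ {2,…,r}; Σ_{j≠i}(z_{ij} − z_{ji}) = 1 for every i ∈ {2,…,r}; and y_{ij} + z_{ij} = (r − 1)·x_{ij} for all i ≠ j (the two-commodity flow formulation of Finke, Claus and Gunn). -/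
lemma flow_sum_aux {r : ℕ} (σ : Equiv.Perm (Fin r)) (hσ : ∀ i, σ i ≠ i)
    (y : Fin r → Fin r → ℝ) (hy : ∀ i j, i ≠ j → σ i ≠ j → y i j = 0) (i : Fin r) :
    ∑ j ∈ Finset.univ.erase i, (y i j - y j i) = y i (σ i) - y (σ.symm i) i := by
  have hs : σ.symm i ≠ i := by
    intro h
    exact hσ i (by rw [Equiv.symm_apply_eq] at h; exact h.symm)
  rw [Finset.sum_sub_distrib]
  congr 1
  · apply Finset.sum_eq_single_of_mem
    · simp [hσ i]
    · intro j hj hne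
      exact hy i j (Finset.ne_of_mem_erase hj).symm hne.symm
  · apply Finset.sum_eq_single_of_mem (f := fun j => y j i)
    · simp [hs]
    · intro j hj hne
      refine hy j i (Finset.ne_of_mem_erase hj) ?_
      intro h
      exact hne (by rw [← h]; simp)

lemma exists_pos_aux {r : ℕ} [NeZero r] (σ : Equiv.Perm (Fin r)) (hσ : IsTour σ) :
    ∃ p : Fin r → ℕ, (∀ i, p i < r) ∧ p 0 = 0 ∧ p (σ.symm 0) + 1 = r ∧
      ∀ i, i ≠ 0 → p i = p (σ.symm i) + 1 := by
  obtain ⟨hc, hf⟩ := hσ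
  have hsupp : σ.support = Finset.univ := by
    ext i; simp [hf i]
  have hord : orderOf σ = r := by
    rw [hc.orderOf, hsupp]; simp
  have hr0 : 0 < r := Nat.pos_of_ne_zero (NeZero.ne r)
  have hpow : σ ^ r = 1 := by
    have := pow_orderOf_eq_one σ
    rwa [hord] at this
  have hex : ∀ i, ∃ k : ℕ, k < r ∧ (σ ^ k) 0 = i := by
    intro i
    obtain ⟨n, hn⟩ := hc.exists_pow_eq (hf 0) (hf i)
    refine ⟨n % r, Nat.mod_lt _ hr0, ?_⟩
    have h2 := pow_mod_orderOf σ n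
    rw [hord] at h2
    rw [h2, hn]
  choose p hp hpe using hex
  have hsurj : Function.Surjective (fun k : Fin r => (σ ^ (k : ℕ)) 0) := fun i =>
    ⟨⟨p i, hp i⟩, hpe i⟩
  have hinj := Finite.injective_iff_surjective.mpr hsurj
  have huniq : ∀ (k : ℕ) (i : Fin r), k < r → (σ ^ k) 0 = i → p i = k := by
    intro k i hk h
    have h3 : (⟨p i, hp i⟩ : Fin r) = ⟨k, hk⟩ := hinj (by simp only [hpe, h])
    exact congrArg Fin.val h3
  have hstep : ∀ i, (σ ^ (p (σ.symm i) + 1)) 0 = i := by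
    intro i
    rw [pow_succ', Equiv.Perm.mul_apply, hpe]; simp
  have h0 : p 0 = 0 := huniq 0 0 hr0 (by simp)
  refine ⟨p, hp, h0, ?_, ?_⟩
  · by_contra hne
    have hlt := hp (σ.symm 0)
    have := huniq (p (σ.symm 0) + 1) 0 (by omega) (hstep 0)
    omega
  · intro i hi
    refine huniq _ i ?_ (hstep i)
    have hlt := hp (σ.symm i)
    by_contra hge
    have he : p (σ.symm i) + 1 = r := by omega
    have h4 := hstep i
    rw [he, hpow] at h4
    exact hi (by simpa using h4.symm)

lemma exists_perm_aux {r : ℕ} (x : Fin r → Fin r → ℝ)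
    (hbin : ∀ i j, x i j = 0 ∨ x i j = 1)
    (hdiag : ∀ i, x i i = 0)
    (hassign₁ : ∀ j : Fin r, ∑ i ∈ Finset.univ.erase j, x i j = 1)
    (hassign₂ : ∀ i : Fin r, ∑ j ∈ Finset.univ.erase i, x i j = 1) :
    ∃ σ : Equiv.Perm (Fin r), (∀ i, σ i ≠ i) ∧ ∀ i j, x i j = incidence σ i j := by
  have hnn : ∀ i j, 0 ≤ x i j := by
    intro i j
    rcases hbin i j with h | h <;> rw [h] <;> norm_num
  have hex : ∀ i, ∃ j, x i j = 1 := by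
    intro i
    by_contra hcon
    push Not at hcon
    have h := hassign₂ i
    rw [Finset.sum_eq_zero (fun j _ => (hbin i j).resolve_right (hcon j))] at h
    norm_num at h
  choose f hf using hex
  have hne : ∀ i j, x i j = 1 → i ≠ j := by
    rintro i j h rfl
    rw [hdiag] at h; norm_num at h
  have huniq : ∀ i j, x i j = 1 → f i = j := by
    intro i j h
    by_contra hcon
    have h2 : ∑ k ∈ ({f i, j} : Finset (Fin r)), x i k ≤ ∑ k ∈ Finset.univ.erase i, x i k := by
      apply Finset.sum_le_sum_of_subset_of_nonneg
      · intro k hk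
        simp only [Finset.mem_insert, Finset.mem_singleton] at hk
        rcases hk with rfl | rfl
        · simp [(hne i _ (hf i)).symm]
        · simp [(hne i _ h).symm]
      · intros; exact hnn _ _
    rw [Finset.sum_pair hcon, hassign₂, hf, h] at h2
    norm_num at h2
  have hinj : Function.Injective f := by
    intro a b hab
    by_contra hcon
    have hb : x b (f a) = 1 := by rw [hab]; exact hf b
    have h2 : ∑ k ∈ ({a, b} : Finset (Fin r)), x k (f a)
        ≤ ∑ k ∈ Finset.univ.erase (f a), x k (f a) := by
      apply Finset.sum_le_sum_of_subset_of_nonneg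
      · intro k hk
        simp only [Finset.mem_insert, Finset.mem_singleton] at hk
        rcases hk with h | h
        · subst h; simp [hne _ _ (hf k)]
        · subst h; simp [hne _ _ hb]
      · intros; exact hnn _ _
    rw [Finset.sum_pair hcon, hassign₁, hf, hb] at h2
    norm_num at h2
  refine ⟨Equiv.ofBijective f (Finite.injective_iff_bijective.mp hinj), ?_, ?_⟩
  · intro i
    exact (hne i _ (hf i)).symm
  · intro i j
    simp only [incidence, Equiv.ofBijective_apply]
    split_ifs with h
    · rw [← h]; exact hf i
    · exact (hbin i j).resolve_right (fun h1 => h (huniq i j h1))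

/-- A binary matrix with zero diagonal satisfying the assignment constraints is
the incidence vector of a tour iff there exist nonnegative flows `y`, `z`
satisfying the two-commodity flow constraints of Finke, Claus and Gunn
(node `1` is index `0`). -/
theorem two_commodity_flow_characterizes_tours (r : ℕ) [NeZero r] (hr : 3 ≤ r)
    (x : Fin r → Fin r → ℝ)
    (hbin : ∀ i j, x i j = 0 ∨ x i j = 1)
    (hdiag : ∀ i, x i i = 0)
    (hassign₁ : ∀ j : Fin r, ∑ i ∈ Finset.univ.erase j, x i j = 1)
    (hassign₂ : ∀ i : Fin r, ∑ j ∈ Finset.univ.erase i, x i j = 1) :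
    (∃ σ : Equiv.Perm (Fin r), IsTour σ ∧ ∀ i j, x i j = incidence σ i j) ↔
    (∃ y z : Fin r → Fin r → ℝ,
      (∀ i j : Fin r, i ≠ j → 0 ≤ y i j) ∧
      (∀ i j : Fin r, i ≠ j → 0 ≤ z i j) ∧
      (∑ j ∈ Finset.univ.erase (0 : Fin r), (y 0 j - y j 0) = (r : ℝ) - 1) ∧
      (∑ j ∈ Finset.univ.erase (0 : Fin r), (z 0 j - z j 0) = -((r : ℝ) - 1)) ∧
      (∀ i : Fin r, i ≠ 0 → ∑ j ∈ Finset.univ.erase i, (y i j - y j i) = -1) ∧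
      (∀ i : Fin r, i ≠ 0 → ∑ j ∈ Finset.univ.erase i, (z i j - z j i) = 1) ∧
      (∀ i j : Fin r, i ≠ j → y i j + z i j = ((r : ℝ) - 1) * x i j)) := by
  constructor
  · rintro ⟨σ, hσ, hx⟩
    obtain ⟨p, hp, h0, hlast, hstep⟩ := exists_pos_aux σ hσ
    have hY := flow_sum_aux σ hσ.2 (fun i j => if σ i = j then (r : ℝ) - 1 - p i else 0)
      (fun i j _ h => by simp [h])
    have hZ := flow_sum_aux σ hσ.2 (fun i j => if σ i = j then (p i : ℝ) else 0)
      (fun i j _ h => by simp [h])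
    have hlast' : (p (σ.symm 0) : ℝ) + 1 = r := by exact_mod_cast hlast
    have hstep' : ∀ i, i ≠ 0 → (p i : ℝ) = p (σ.symm i) + 1 := by
      intro i hi; exact_mod_cast hstep i hi
    refine ⟨fun i j => if σ i = j then (r : ℝ) - 1 - p i else 0,
      fun i j => if σ i = j then (p i : ℝ) else 0, ?_, ?_, ?_, ?_, ?_, ?_, ?_⟩
    · intro i j _
      have h1 : (p i : ℝ) + 1 ≤ r := by exact_mod_cast hp i
      dsimp only
      split_ifs <;> linarith
    · intro i j _
      dsimp only
      split_ifs <;> positivity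
    · refine (hY 0).trans ?_
      simp only [Equiv.apply_symm_apply, if_true, h0, Nat.cast_zero]
      linarith
    · refine (hZ 0).trans ?_
      simp only [Equiv.apply_symm_apply, if_true, h0, Nat.cast_zero]
      linarith
    · intro i hi
      refine (hY i).trans ?_
      simp only [Equiv.apply_symm_apply, if_true]
      linarith [hstep' i hi]
    · intro i hi
      refine (hZ i).trans ?_
      simp only [Equiv.apply_symm_apply, if_true]
      linarith [hstep' i hi]
    · intro i j _
      rw [hx]
      simp only [incidence]
      split_ifs <;> ring
  · rintro ⟨y, z, hy, hz, -, -, hyi, -, hyz⟩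
    obtain ⟨σ, hσ, hx⟩ := exists_perm_aux x hbin hdiag hassign₁ hassign₂
    refine ⟨σ, ⟨?_, hσ⟩, hx⟩
    have hsup : ∀ i j, i ≠ j → σ i ≠ j → y i j = 0 := by
      intro i j hij h
      have h1 := hyz i j hij
      rw [hx] at h1
      simp only [incidence, h, if_false, mul_zero] at h1
      linarith [hy i j hij, hz i j hij]
    have hY := flow_sum_aux σ hσ y hsup
    have hdec : ∀ i, σ i ≠ 0 → y (σ i) (σ (σ i)) = y i (σ i) - 1 := by
      intro i hi
      have h1 := hY (σ i)
      rw [hyi _ hi, Equiv.symm_apply_apply] at h1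
      linarith
    refine ⟨0, hσ 0, fun i _ => ?_⟩
    by_contra hns
    have hn0 : ∀ n : ℕ, (σ ^ n) i ≠ 0 := by
      intro n hn
      exact hns (Equiv.Perm.SameCycle.symm ⟨n, by simpa using hn⟩)
    have hind : ∀ n : ℕ, y ((σ ^ n) i) (σ ((σ ^ n) i)) = y i (σ i) - n := by
      intro n
      induction n with
      | zero => simp
      | succ n ih =>
        have h1 := hn0 (n + 1)
        rw [pow_succ', Equiv.Perm.mul_apply] at h1 ⊢
        rw [hdec _ h1, ih]; push_cast; ring
    have h2 := hind (orderOf σ)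
    rw [pow_orderOf_eq_one] at h2
    have h3 : (0 : ℝ) < orderOf σ := by exact_mod_cast orderOf_pos σ
    simp only [Equiv.Perm.one_apply] at h2
    linarith
end

section
/- For every tour σ on {1,…,r} with incidence vector x and positions u, the three-node non-radical inequality u_i − u_k + (r−1)(x_{ij} + x_{jk}) + (r−3)(x_{kj} + x_{ji}) + r·x_{ik} + (r−4)·x_{ki} ≤ 2r − 4 holds for all pairwise distinct i, j, k ∈ {2,…,r}. -/
lemma pos_succ {r : ℕ} [NeZero r] {σ : Equiv.Perm (Fin r)} {u : Fin r → ℕ}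
    (hu : IsPositions σ u) {a b : Fin r} (hb : b ≠ 0) (h : σ a = b) : u b = u a + 1 := by
  have hinj : Function.Injective u := by
    intro c d hcd
    rw [← (hu c).2.2, ← (hu d).2.2, hcd]
  have himg : Finset.univ.image u = Finset.Icc 1 r := by
    apply Finset.eq_of_subset_of_card_le
    · intro n hn
      obtain ⟨c, -, rfl⟩ := Finset.mem_image.1 hn
      exact Finset.mem_Icc.2 ⟨(hu c).1, (hu c).2.1⟩
    · rw [Finset.card_image_of_injective _ hinj]; simp
  obtain ⟨h1, h2, h3⟩ := hu b
  have hne : u b ≠ 1 := by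
    intro h'
    rw [h'] at h3
    exact hb (by simpa using h3.symm)
  obtain ⟨q, hq⟩ : ∃ q, u b = q + 2 := ⟨u b - 2, by omega⟩
  have hm : q + 1 ∈ Finset.univ.image u := by
    rw [himg, Finset.mem_Icc]; omega
  obtain ⟨d, -, hd⟩ := Finset.mem_image.1 hm
  have h4 := (hu d).2.2
  rw [hd] at h4
  rw [hq] at h3
  have h5 : σ ((σ ^ q) 0) = b := by
    rw [← Equiv.Perm.mul_apply, ← pow_succ']; exact h3
  have h6 : (σ ^ q) 0 = d := h4
  rw [h6, ← h] at h5
  have h7 := σ.injective h5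
  subst h7
  omega

theorem nonradical_valid (r : ℕ) [NeZero r] (hr : 4 ≤ r)
    (σ : Equiv.Perm (Fin r)) (hσ : IsTour σ)
    (u : Fin r → ℕ) (hu : IsPositions σ u)
    (i j k : Fin r) (hi : i ≠ 0) (hj : j ≠ 0) (hk : k ≠ 0)
    (hij : i ≠ j) (hik : i ≠ k) (hjk : j ≠ k) :
    (u i : ℝ) - (u k : ℝ) + ((r : ℝ) - 1) * (incidence σ i j + incidence σ j k)
      + ((r : ℝ) - 3) * (incidence σ k j + incidence σ j i)
      + (r : ℝ) * incidence σ i k + ((r : ℝ) - 4) * incidence σ k i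
      ≤ 2 * (r : ℝ) - 4 := by
  have hinj : Function.Injective u := by
    intro c d hcd
    rw [← (hu c).2.2, ← (hu d).2.2, hcd]
  have two : ∀ b, b ≠ 0 → 2 ≤ u b := by
    intro b hb
    obtain ⟨h1, h2, h3⟩ := hu b
    have hne : u b ≠ 1 := by
      intro h'
      rw [h'] at h3
      exact hb (by simpa using h3.symm)
    omega
  have bi := two i hi
  have bj := two j hj
  have bk := two k hk
  have ci := (hu i).2.1
  have cj := (hu j).2.1
  have ck := (hu k).2.1
  have dij := hinj.ne hij
  have dik := hinj.ne hik
  have djk := hinj.ne hjk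
  have eij : σ i = j → u j = u i + 1 := pos_succ hu hj
  have ejk : σ j = k → u k = u j + 1 := pos_succ hu hk
  have ekj : σ k = j → u j = u k + 1 := pos_succ hu hj
  have eji : σ j = i → u i = u j + 1 := pos_succ hu hi
  have eik : σ i = k → u k = u i + 1 := pos_succ hu hk
  have eki : σ k = i → u i = u k + 1 := pos_succ hu hi
  have key : (u i : ℤ) - (u k : ℤ)
      + ((r : ℤ) - 1) * ((if σ i = j then 1 else 0) + (if σ j = k then 1 else 0))
      + ((r : ℤ) - 3) * ((if σ k = j then 1 else 0) + (if σ j = i then 1 else 0))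
      + (r : ℤ) * (if σ i = k then 1 else 0) + ((r : ℤ) - 4) * (if σ k = i then 1 else 0)
      ≤ 2 * (r : ℤ) - 4 := by
    have tr : ∀ (p q : Prop) [Decidable p], (p → q) →
        ((if p then (1 : ℤ) else 0) = 0 ∨ ((if p then (1 : ℤ) else 0) = 1 ∧ q)) := by
      intro p q _ hpq
      by_cases hp : p
      · right; exact ⟨if_pos hp, hpq hp⟩
      · left; exact if_neg hp
    rcases tr _ _ eij with h1 | ⟨h1, g1⟩ <;> rcases tr _ _ ejk with h2 | ⟨h2, g2⟩ <;>
    rcases tr _ _ ekj with h3 | ⟨h3, g3⟩ <;> rcases tr _ _ eji with h4 | ⟨h4, g4⟩ <;>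
    rcases tr _ _ eik with h5 | ⟨h5, g5⟩ <;> rcases tr _ _ eki with h6 | ⟨h6, g6⟩ <;>
    rw [h1, h2, h3, h4, h5, h6] <;> clear h1 h2 h3 h4 h5 h6 <;> omega
  unfold incidence
  exact_mod_cast key
end

section
/- For every tour σ on {1,…,r} with incidence vector x and positions u, the three-node radical inequality 2u_i − u_j − u_k + (2r−2)(x_{ij} + x_{ik}) + (2r−8)(x_{ji} + x_{ki}) + (2r−5)(x_{jk} + x_{kj}) ≤ 4r − 10 holds for all pairwise distinct i, j, k ∈ {2,…,r}. -/
lemma pos_step {r : ℕ} [NeZero r] (σ : Equiv.Perm (Fin r))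
    (u : Fin r → ℕ) (hu : IsPositions σ u) (a b : Fin r) (hb : b ≠ 0)
    (hab : σ a = b) : u b = u a + 1 := by
  have hsurj : Function.Surjective (fun n : Fin r => (σ ^ (n : ℕ)) (0 : Fin r)) := by
    intro c
    obtain ⟨h1, h2, h3⟩ := hu c
    exact ⟨⟨u c - 1, by omega⟩, h3⟩
  have hinj := Finite.injective_iff_surjective.mpr hsurj
  have inj : ∀ m n : ℕ, m < r → n < r → (σ ^ m) (0 : Fin r) = (σ ^ n) 0 → m = n := by
    intro m n hm hn h
    have := @hinj ⟨m, hm⟩ ⟨n, hn⟩ h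
    simpa using this
  obtain ⟨a1, a2, a3⟩ := hu a
  obtain ⟨b1, b2, b3⟩ := hu b
  have hb2 : u b ≠ 1 := by
    intro h
    rw [h] at b3
    exact hb (by simpa using b3.symm)
  have key : (σ ^ (u b - 2)) (0 : Fin r) = a := by
    apply σ.injective
    rw [hab, ← Equiv.Perm.mul_apply, ← pow_succ', ← b3]
    congr 2
    rw [b3]
    omega
  have := inj (u b - 2) (u a - 1) (by omega) (by omega) (key.trans a3.symm)
  omega

lemma inc_cases {r : ℕ} [NeZero r] (σ : Equiv.Perm (Fin r))
    (u : Fin r → ℕ) (hu : IsPositions σ u) (a b : Fin r) (hb : b ≠ 0) :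
    ∃ z : ℤ, incidence σ a b = (z : ℝ) ∧ (z = 0 ∨ z = 1 ∧ u b = u a + 1) := by
  by_cases h : σ a = b
  · exact ⟨1, by simp [incidence, h], Or.inr ⟨rfl, pos_step σ u hu a b hb h⟩⟩
  · exact ⟨0, by simp [incidence, h], Or.inl rfl⟩

theorem radical_valid (r : ℕ) [NeZero r] (hr : 4 ≤ r)
    (σ : Equiv.Perm (Fin r)) (hσ : IsTour σ)
    (u : Fin r → ℕ) (hu : IsPositions σ u)
    (i j k : Fin r) (hi : i ≠ 0) (hj : j ≠ 0) (hk : k ≠ 0)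
    (hij : i ≠ j) (hik : i ≠ k) (hjk : j ≠ k) :
    2 * (u i : ℝ) - (u j : ℝ) - (u k : ℝ)
      + (2 * (r : ℝ) - 2) * (incidence σ i j + incidence σ i k)
      + (2 * (r : ℝ) - 8) * (incidence σ j i + incidence σ k i)
      + (2 * (r : ℝ) - 5) * (incidence σ j k + incidence σ k j)
      ≤ 4 * (r : ℝ) - 10 := by
  have u2 : ∀ a : Fin r, a ≠ 0 → 2 ≤ u a ∧ u a ≤ r := by
    intro a ha
    obtain ⟨h1, h2, h3⟩ := hu a
    refine ⟨?_, h2⟩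
    by_contra hlt
    have h : u a = 1 := by omega
    rw [h] at h3
    exact ha (by simpa using h3.symm)
  have ud : ∀ a b : Fin r, a ≠ b → u a ≠ u b := by
    intro a b hab h
    apply hab
    rw [← (hu a).2.2, ← (hu b).2.2, h]
  have di := u2 i hi
  have dj := u2 j hj
  have dk := u2 k hk
  have dij := ud i j hij
  have dik := ud i k hik
  have djk := ud j k hjk
  obtain ⟨z1, e1, c1⟩ := inc_cases σ u hu i j hj
  obtain ⟨z2, e2, c2⟩ := inc_cases σ u hu i k hk
  obtain ⟨z3, e3, c3⟩ := inc_cases σ u hu j i hi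
  obtain ⟨z4, e4, c4⟩ := inc_cases σ u hu k i hi
  obtain ⟨z5, e5, c5⟩ := inc_cases σ u hu j k hk
  obtain ⟨z6, e6, c6⟩ := inc_cases σ u hu k j hj
  rw [e1, e2, e3, e4, e5, e6]
  have main : 2 * (u i : ℤ) - (u j : ℤ) - (u k : ℤ)
      + (2 * (r : ℤ) - 2) * (z1 + z2) + (2 * (r : ℤ) - 8) * (z3 + z4)
      + (2 * (r : ℤ) - 5) * (z5 + z6) ≤ 4 * (r : ℤ) - 10 := by
    clear e1 e2 e3 e4 e5 e6
    rcases c1 with rfl | ⟨rfl, c1⟩ <;> rcases c2 with rfl | ⟨rfl, c2⟩ <;>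
    (try omega) <;>
    rcases c3 with rfl | ⟨rfl, c3⟩ <;> (try omega) <;>
    rcases c4 with rfl | ⟨rfl, c4⟩ <;> (try omega) <;>
    rcases c5 with rfl | ⟨rfl, c5⟩ <;> (try omega) <;>
    rcases c6 with rfl | ⟨rfl, c6⟩ <;> omega
  exact_mod_cast main
end

section
/- For every tour σ on {1,…,r} with incidence vector x, the lifted circuit inequality 2·x_{ik} + x_{ki} + x_{ij} + x_{jk} ≤ 2 holds for all pairwise distinct i, j, k ∈ {2,…,r} (this inequality is obtained by summing the two 2PATH inequalities for the triple (i,j,k) and dividing by 2r − 5). -/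
/-- A set containing `i` and closed under a tour contains every node. -/
theorem tour_closed {r : ℕ} (σ : Equiv.Perm (Fin r)) (hσ : IsTour σ)
    (P : Fin r → Prop) (hP : ∀ a, P a → P (σ a)) (i b : Fin r) (hi : P i) : P b := by
  obtain ⟨n, hn⟩ := (hσ.1.sameCycle (hσ.2 i) (hσ.2 b)).exists_nat_pow_eq
  have key : ∀ m : ℕ, P ((σ ^ m) i) := by
    intro m
    induction m with
    | zero => simpa using hi
    | succ m ih => rw [pow_succ', Equiv.Perm.mul_apply]; exact hP _ ih
  exact hn ▸ key n

/-- For every tour with incidence vector `x`, the lifted circuit inequality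
`2·x i k + x k i + x i j + x j k ≤ 2` holds for all pairwise distinct
`i, j, k ∈ {2, …, r}` (node `1` is index `0`). -/
theorem lifted_circuit_valid (r : ℕ) [NeZero r] (hr : 4 ≤ r)
    (σ : Equiv.Perm (Fin r)) (hσ : IsTour σ)
    (i j k : Fin r) (hi : i ≠ 0) (hj : j ≠ 0) (hk : k ≠ 0)
    (hij : i ≠ j) (hik : i ≠ k) (hjk : j ≠ k) :
    2 * incidence σ i k + incidence σ k i + incidence σ i j + incidence σ j k
      ≤ 2 := by
  have h2 : ¬ (σ i = k ∧ σ k = i) := by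
    rintro ⟨h, h'⟩
    have := tour_closed σ hσ (fun a => a = i ∨ a = k)
      (by rintro a (rfl | rfl) <;> simp [h, h']) i 0 (Or.inl rfl)
    grind
  have h3 : ¬ (σ k = i ∧ σ i = j ∧ σ j = k) := by
    rintro ⟨h, h', h''⟩
    have := tour_closed σ hσ (fun a => a = i ∨ a = j ∨ a = k)
      (by rintro a (rfl | rfl | rfl) <;> simp [h, h', h'']) i 0 (Or.inl rfl)
    grind
  have h4 : ¬ (σ i = k ∧ σ j = k) := fun h =>
    hij (σ.injective (h.1.trans h.2.symm))
  have h5 : ¬ (σ i = k ∧ σ i = j) := fun h => hjk (h.2.symm.trans h.1)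
  unfold incidence
  by_cases a : σ i = k
  · have b : ¬ σ k = i := fun h => h2 ⟨a, h⟩
    have c : ¬ σ i = j := fun h => h5 ⟨a, h⟩
    have d : ¬ σ j = k := fun h => h4 ⟨a, h⟩
    rw [if_pos a, if_neg b, if_neg c, if_neg d]; norm_num
  · rw [if_neg a]
    by_cases b : σ k = i
    · by_cases c : σ i = j
      · have d : ¬ σ j = k := fun h => h3 ⟨b, c, h⟩
        rw [if_pos b, if_pos c, if_neg d]; norm_num
      · rw [if_pos b, if_neg c]; split_ifs <;> norm_num
    · rw [if_neg b]; split_ifs <;> norm_num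
end

section
/- For every feasible plan (q, I, δ) of the Wagner–Whitin lot-sizing problem there exists a feasible plan (q', I', δ') of total cost at most that of (q, I, δ) which satisfies the zero-inventory ordering property: q'_t · I'_{t−1} = 0 for every period t ∈ {1,…,N} (with I'_0 = 0). -/
/-- A feasible plan `(q, I, δ)` of the Wagner–Whitin lot-sizing problem over
periods `1, …, N` with demands `d`: zero initial inventory, nonnegative order
quantities and inventory levels, binary setup indicators, inventory balance,
and no ordering without a setup. -/
def FeasiblePlan (N : ℕ) (d q I δ : ℕ → ℝ) : Prop :=
  I 0 = 0 ∧
  ∀ t ∈ Finset.Icc 1 N,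
    0 ≤ q t ∧ 0 ≤ I t ∧ (δ t = 0 ∨ δ t = 1) ∧
    I t = I (t - 1) + q t - d t ∧ (δ t = 0 → q t = 0)

/-- Total cost of a plan: fixed ordering, holding and unit ordering costs. -/
def planCost (N : ℕ) (K h v : ℝ) (q I δ : ℕ → ℝ) : ℝ :=
  ∑ t ∈ Finset.Icc 1 N, (K * δ t + h * I t + v * q t)

/-- Demand still to be covered before the next setup, counted backwards from `N`. -/
noncomputable def zioAux (N : ℕ) (d δ : ℕ → ℝ) : ℕ → ℝ
  | 0 => 0
  | k + 1 => if δ (N - k) = 1 then 0 else d (N - k) + zioAux N d δ k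

theorem zio_sum (d q I : ℕ → ℝ) (N : ℕ)
    (hb : ∀ t ∈ Finset.Icc 1 N, I t = I (t - 1) + q t - d t) :
    ∑ t ∈ Finset.Icc 1 N, q t = ∑ t ∈ Finset.Icc 1 N, d t + I N - I 0 := by
  induction N with
  | zero => simp
  | succ n ih =>
    rw [Finset.sum_Icc_succ_top (by omega), Finset.sum_Icc_succ_top (by omega), ih]
    · have := hb (n + 1) (by simp)
      simp only [Nat.add_sub_cancel] at this
      linarith
    · intro t ht
      apply hb
      simp only [Finset.mem_Icc] at ht ⊢
      omega

/-- For every feasible plan of the Wagner–Whitin lot-sizing problem there is a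
feasible plan of no greater total cost satisfying the zero-inventory ordering
property `q' t · I' (t−1) = 0` for every period `t ∈ {1, …, N}`. -/
theorem zero_inventory_ordering (N : ℕ) (d : ℕ → ℝ)
    (hd : ∀ t ∈ Finset.Icc 1 N, 0 < d t)
    (K h v : ℝ) (hK : 0 ≤ K) (hh : 0 ≤ h) (hv : 0 ≤ v)
    (q I δ : ℕ → ℝ) (hfeas : FeasiblePlan N d q I δ) :
    ∃ q' I' δ' : ℕ → ℝ, FeasiblePlan N d q' I' δ' ∧
      planCost N K h v q' I' δ' ≤ planCost N K h v q I δ ∧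
      ∀ t ∈ Finset.Icc 1 N, q' t * I' (t - 1) = 0 := by
  obtain ⟨h0, hf⟩ := hfeas
  obtain ⟨J, hJN, hJ⟩ : ∃ J : ℕ → ℝ, J N = 0 ∧ ∀ t ∈ Finset.Icc 1 N,
      J (t - 1) = if δ t = 1 then 0 else d t + J t := by
    refine ⟨fun t => zioAux N d δ (N - t), by simp [zioAux], ?_⟩
    intro t ht
    simp only [Finset.mem_Icc] at ht
    have e1 : N - (t - 1) = (N - t) + 1 := by omega
    have e2 : N - (N - t) = t := by omega
    simp only [e1, zioAux, e2]
  have hb : ∀ k, k ≤ N → 0 ≤ J (N - k) ∧ J (N - k) ≤ I (N - k) := by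
    have hI : ∀ t, t ≤ N → 0 ≤ I t := by
      intro t ht
      rcases Nat.eq_zero_or_pos t with rfl | hp
      · exact h0.ge
      · exact (hf t (Finset.mem_Icc.2 ⟨hp, ht⟩)).2.1
    intro k
    induction k with
    | zero => intro _; simpa [hJN] using hI N le_rfl
    | succ k ih =>
      intro hk
      obtain ⟨i1, i2⟩ := ih (by omega)
      have hm : N - k ∈ Finset.Icc 1 N := by
        simp only [Finset.mem_Icc]; omega
      have e := hJ _ hm
      have hI' := hI (N - (k + 1)) (by omega)
      have ed : N - k - 1 = N - (k + 1) := by omega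
      obtain ⟨_, _, h3, h4, h5⟩ := hf _ hm
      have hdp := hd _ hm
      rw [ed] at e h4
      rw [e]
      split_ifs with hs
      · exact ⟨le_rfl, hI'⟩
      · have := h5 (h3.resolve_right hs)
        constructor <;> linarith
  have hb' : ∀ t, t ≤ N → 0 ≤ J t ∧ J t ≤ I t := by
    intro t ht
    have := hb (N - t) (by omega)
    rwa [Nat.sub_sub_self ht] at this
  have hJ0 : J 0 = 0 := by
    have := hb' 0 (by omega)
    linarith [this.1, this.2]
  refine ⟨fun t => J t + d t - J (t - 1), J, δ, ⟨hJ0, ?_⟩, ?_, ?_⟩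
  · intro t ht
    have hJt := hb' t (Finset.mem_Icc.1 ht).2
    have e := hJ t ht
    have hdp := hd t ht
    have h3 := (hf t ht).2.2.1
    refine ⟨?_, hJt.1, h3, by ring, ?_⟩
    · simp only [e]
      split_ifs <;> linarith [hJt.1]
    · intro hz
      simp only [e, hz]
      norm_num
      ring
  · have s1 := zio_sum d q I N (fun t ht => (hf t ht).2.2.2.1)
    have s2 := zio_sum d (fun t => J t + d t - J (t - 1)) J N (fun t _ => by ring)
    have hIN := hb' N le_rfl
    have s3 : ∑ t ∈ Finset.Icc 1 N, J t ≤ ∑ t ∈ Finset.Icc 1 N, I t :=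
      Finset.sum_le_sum fun t ht => (hb' t (Finset.mem_Icc.1 ht).2).2
    have s4 : ∑ t ∈ Finset.Icc 1 N, (J t + d t - J (t - 1)) ≤ ∑ t ∈ Finset.Icc 1 N, q t := by
      rw [s1, s2]
      linarith [hIN.1, hIN.2]
    unfold planCost
    simp only [Finset.sum_add_distrib (f := fun t => K * δ t + h * _),
      Finset.sum_add_distrib (f := fun t => K * δ t), ← Finset.mul_sum]
    have := mul_le_mul_of_nonneg_left s3 hh
    have := mul_le_mul_of_nonneg_left s4 hv
    linarith
  · intro t ht
    have e := hJ t ht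
    simp only [e]
    split_ifs <;> ring
end

section
/- The minimum total cost over all feasible plans of the Wagner–Whitin lot-sizing problem equals the minimum, over all increasing sequences 1 = t_1 < t_2 < ⋯ < t_m = N + 1, of Σ_{l=1}^{m−1} ω(t_l, t_{l+1}), where ω(i, j) = K + v·Σ_{k=i}^{j−1} d_k + h·Σ_{k=i}^{j−1} (k − i)·d_k for 1 ≤ i < j ≤ N + 1; i.e., the lot-sizing problem is equivalent to a shortest path problem on the acyclic network with nodes 1,…,N+1 and arc costs ω(i, j). -/
/-- The arc cost `ω(i, j) = K + v·Σ_{k=i}^{j−1} d k + h·Σ_{k=i}^{j−1} (k−i)·d k`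
of ordering in period `i` to cover the demands of periods `i, …, j − 1`. -/
def arcCost (K h v : ℝ) (d : ℕ → ℝ) (i j : ℕ) : ℝ :=
  K + v * ∑ k ∈ Finset.Ico i j, d k +
    h * ∑ k ∈ Finset.Ico i j, ((k : ℝ) - (i : ℝ)) * d k

/-- `PathTo K h v d n c`: there is a path from node `1` to node `n + 1` of cost `c`. -/
inductive PathTo (K h v : ℝ) (d : ℕ → ℝ) : ℕ → ℝ → Prop
  | nil : PathTo K h v d 0 0
  | step (i j : ℕ) (c : ℝ) : PathTo K h v d i c → i < j →
      PathTo K h v d j (c + arcCost K h v d (i + 1) (j + 1))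

theorem PathTo.finite (K h v : ℝ) (d : ℕ → ℝ) (n : ℕ) :
    {c : ℝ | PathTo K h v d n c}.Finite := by
  induction n using Nat.strong_induction_on with
  | _ n ih =>
    have hfin : ({0} ∪ ⋃ i ∈ Set.Iio n, (fun c => c + arcCost K h v d (i + 1) (n + 1)) ''
        {c : ℝ | PathTo K h v d i c}).Finite := by
      refine (Set.finite_singleton _).union ?_
      refine (Set.finite_Iio n).biUnion ?_
      intro i hi
      exact (ih i hi).image _
    refine hfin.subset ?_
    intro c hc
    cases hc with
    | nil => left; rfl
    | step i j c hc hij =>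
      right
      simp only [Set.mem_iUnion]
      exact ⟨i, hij, c, hc, rfl⟩

theorem PathTo.exists_path (K h v : ℝ) (d : ℕ → ℝ) (n : ℕ) : ∃ c, PathTo K h v d n c := by
  rcases Nat.eq_zero_or_pos n with rfl | hn
  · exact ⟨0, .nil⟩
  · exact ⟨_, .step 0 n 0 .nil hn⟩

theorem PathTo.of_seq (K h v : ℝ) (d : ℕ → ℝ) (m : ℕ) (t : ℕ → ℕ) (h1 : t 1 = 1)
    (ht : ∀ l, 1 ≤ l → l < m → t l < t (l + 1)) (k : ℕ) (hk : k < m) :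
    ∃ a, t (k + 1) = a + 1 ∧ PathTo K h v d a
      (∑ l ∈ Finset.Icc 1 k, arcCost K h v d (t l) (t (l + 1))) := by
  induction k with
  | zero => exact ⟨0, by simpa using h1, by simpa using PathTo.nil⟩
  | succ k ih =>
    obtain ⟨a, ha, hp⟩ := ih (by omega)
    have hlt := ht (k + 1) (by omega) hk
    refine ⟨t (k + 1 + 1) - 1, by omega, ?_⟩
    rw [Finset.sum_Icc_succ_top (by omega)]
    have := PathTo.step a (t (k + 1 + 1) - 1) _ hp (by omega)
    rwa [show t (k + 1 + 1) - 1 + 1 = t (k + 1 + 1) by omega, ← ha] at this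

theorem PathTo.to_seq (K h v : ℝ) (d : ℕ → ℝ) (n : ℕ) (c : ℝ) (hp : PathTo K h v d n c) :
    ∃ (m : ℕ) (t : ℕ → ℕ), t 1 = 1 ∧ t (m + 1) = n + 1 ∧
        (∀ l, 1 ≤ l → l < m + 1 → t l < t (l + 1)) ∧
        ∑ l ∈ Finset.Icc 1 m, arcCost K h v d (t l) (t (l + 1)) = c := by
  induction hp with
  | nil => exact ⟨0, fun _ => 1, rfl, rfl, by intro l h1 h2; omega, by simp⟩
  | step i j c hp hij ih =>
    obtain ⟨m, t, h1, h2, h3, h4⟩ := ih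
    refine ⟨m + 1, fun l => if l ≤ m + 1 then t l else j + 1, by simp [h1], by simp, ?_, ?_⟩
    · intro l hl1 hl2
      rcases Nat.lt_or_ge l (m + 1) with hl | hl
      · simpa [show l ≤ m + 1 by omega, show l ≤ m by omega] using h3 l hl1 hl
      · obtain rfl : l = m + 1 := by omega
        simp [h2, hij]
    · rw [Finset.sum_Icc_succ_top (by omega), ← h4]
      congr 1
      · apply Finset.sum_congr rfl
        intro l hl
        rw [Finset.mem_Icc] at hl
        simp [show l ≤ m + 1 by omega, show l ≤ m by omega]
      · simp [h2]

theorem PathTo.to_plan (K h v : ℝ) (d : ℕ → ℝ) (n : ℕ) (c : ℝ) (hp : PathTo K h v d n c) :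
    (∀ t ∈ Finset.Icc 1 n, 0 < d t) →
    ∃ q I δ : ℕ → ℝ, FeasiblePlan n d q I δ ∧ I n = 0 ∧ planCost n K h v q I δ = c := by
  induction hp with
  | nil =>
    intro _
    exact ⟨0, 0, 0, ⟨rfl, by intro t ht; simp at ht⟩, rfl, by simp [planCost]⟩
  | step i j c hp hij ih =>
    intro hd
    obtain ⟨q, I, δ, ⟨hI0, hf⟩, hIi, hc⟩ := ih (by
      intro t ht; rw [Finset.mem_Icc] at ht; exact hd t (Finset.mem_Icc.2 (by omega)))
    have hnn : ∀ s, 1 ≤ s → 0 ≤ ∑ k ∈ Finset.Ico s (j + 1), d k := by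
      intro s hs
      apply Finset.sum_nonneg
      intro k hk
      rw [Finset.mem_Ico] at hk
      exact (hd k (Finset.mem_Icc.2 (by omega))).le
    refine ⟨fun t => if t ≤ i then q t else if t = i + 1 then
        ∑ k ∈ Finset.Ico (i + 1) (j + 1), d k else 0,
      fun t => if t ≤ i then I t else ∑ k ∈ Finset.Ico (t + 1) (j + 1), d k,
      fun t => if t ≤ i then δ t else if t = i + 1 then 1 else 0, ⟨by simp [hI0], ?_⟩, ?_, ?_⟩
    · intro t ht
      rw [Finset.mem_Icc] at ht
      rcases Nat.lt_or_ge i t with hit | hit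
      · have hsplit := Finset.sum_eq_sum_Ico_succ_bot (show t < j + 1 by omega) d
        rcases Nat.lt_or_ge (i + 1) t with h1 | h1
        · have e1 : ¬ t ≤ i := by omega
          have e2 : ¬ t = i + 1 := by omega
          have e3 : ¬ t - 1 ≤ i := by omega
          simp only [e1, e2, e3, if_false]
          refine ⟨le_rfl, hnn _ (by omega), Or.inl trivial, ?_, fun _ => trivial⟩
          rw [show t - 1 + 1 = t by omega]
          linarith
        · obtain rfl : t = i + 1 := by omega
          simp only [show ¬ (i + 1 ≤ i) by omega, if_false, if_true,
            show i + 1 - 1 = i by omega, le_refl, hIi]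
          refine ⟨hnn _ (by omega), hnn _ (by omega), Or.inr trivial, by linarith, ?_⟩
          intro h; norm_num at h
      · simp only [hit, if_true, show t - 1 ≤ i by omega]
        exact hf t (Finset.mem_Icc.2 ⟨ht.1, hit⟩)
    · simp [show ¬ j ≤ i by omega]
    · have hIcc : ∀ n : ℕ, Finset.Icc 1 n = Finset.Ico 1 (n + 1) := by
        intro n; ext x; simp [Nat.lt_succ_iff]
      unfold planCost at hc ⊢
      rw [hIcc] at hc ⊢
      rw [← Finset.sum_Ico_consecutive _ (show 1 ≤ i + 1 by omega) (show i + 1 ≤ j + 1 by omega)]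
      congr 1
      · rw [← hc]
        apply Finset.sum_congr rfl
        intro t ht
        rw [Finset.mem_Ico] at ht
        simp only [show t ≤ i by omega, if_true]
      · have hmem : i + 1 ∈ Finset.Ico (i + 1) (j + 1) := by simp; omega
        have hcomm := Finset.sum_Ico_Ico_comm' (i + 1) (j + 1) (fun _ k => d k)
        simp only [Finset.sum_const, Nat.card_Ico, nsmul_eq_mul] at hcomm
        have : ∀ t ∈ Finset.Ico (i + 1) (j + 1),
            (K * (if t ≤ i then δ t else if t = i + 1 then 1 else 0) +
              h * (if t ≤ i then I t else ∑ k ∈ Finset.Ico (t + 1) (j + 1), d k) +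
              v * (if t ≤ i then q t else if t = i + 1 then
                ∑ k ∈ Finset.Ico (i + 1) (j + 1), d k else 0)) =
            (if t = i + 1 then K + v * ∑ k ∈ Finset.Ico (i + 1) (j + 1), d k else 0) +
              h * ∑ k ∈ Finset.Ico (t + 1) (j + 1), d k := by
          intro t ht
          rw [Finset.mem_Ico] at ht
          simp only [show ¬ t ≤ i by omega, if_false]
          split_ifs <;> ring
        rw [Finset.sum_congr rfl this, Finset.sum_add_distrib, ← Finset.mul_sum, hcomm,
          Finset.sum_ite_eq' , if_pos hmem]
        unfold arcCost
        congr 2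
        apply Finset.sum_congr rfl
        intro k hk
        rw [Finset.mem_Ico] at hk
        rw [Nat.cast_sub hk.1]

theorem plan_lower (N : ℕ) (d : ℕ → ℝ) (hd : ∀ t ∈ Finset.Icc 1 N, 0 < d t)
    (K h v : ℝ) (hh : 0 ≤ h) (q I δ : ℕ → ℝ)
    (hf : FeasiblePlan N d q I δ) (n : ℕ) (hn : n + 1 ≤ N) :
    ∃ i c, i ≤ n ∧ PathTo K h v d i c ∧
      c + arcCost K h v d (i + 1) (n + 2) + (v + h * ((n : ℝ) + 1 - i)) * I (n + 1) ≤
        planCost (n + 1) K h v q I δ := by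
  obtain ⟨hI0, hf⟩ := hf
  induction n with
  | zero =>
    have hd1 := hd 1 (Finset.mem_Icc.2 (by omega))
    obtain ⟨hq, hI, hδ, hb, hz⟩ := hf 1 (Finset.mem_Icc.2 (by omega))
    simp only [Nat.sub_self, hI0] at hb
    refine ⟨0, 0, le_rfl, .nil, ?_⟩
    rcases hδ with h0 | h1
    · have := hz h0; linarith
    · simp [planCost, arcCost, h1]
      have : q 1 = I 1 + d 1 := by linarith
      rw [this]; apply le_of_eq; ring
  | succ n ih =>
    obtain ⟨i, c, hin, hp, hle⟩ := ih (by omega)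
    obtain ⟨_, hIn, _⟩ := hf (n + 1) (Finset.mem_Icc.2 (by omega))
    obtain ⟨hq, hI, hδ, hb, hz⟩ := hf (n + 1 + 1) (Finset.mem_Icc.2 (by omega))
    have hcost : planCost (n + 1 + 1) K h v q I δ = planCost (n + 1) K h v q I δ +
        (K * δ (n + 1 + 1) + h * I (n + 1 + 1) + v * q (n + 1 + 1)) := by
      unfold planCost
      rw [Finset.sum_Icc_succ_top (by omega)]
    rw [show n + 1 + 1 - 1 = n + 1 by omega] at hb
    have hcast : (i : ℝ) ≤ n := by exact_mod_cast hin
    rcases hδ with h0 | h1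
    · refine ⟨i, c, by omega, hp, ?_⟩
      have harc : arcCost K h v d (i + 1) (n + 1 + 2) = arcCost K h v d (i + 1) (n + 2) +
          (v + h * ((n : ℝ) + 1 - i)) * d (n + 1 + 1) := by
        unfold arcCost
        rw [Finset.sum_Ico_succ_top (show i + 1 ≤ n + 2 by omega),
          Finset.sum_Ico_succ_top (show i + 1 ≤ n + 2 by omega)]
        push_cast
        ring
      rw [hcost, harc, h0, hz h0]
      have : I (n + 1) = I (n + 1 + 1) + d (n + 1 + 1) := by rw [hz h0] at hb; linarith
      rw [this] at hle
      push_cast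
      linarith
    · refine ⟨n + 1, _, le_rfl, .step i (n + 1) c hp (by omega), ?_⟩
      have harc : arcCost K h v d (n + 1 + 1) (n + 1 + 2) = K + v * d (n + 1 + 1) := by
        simp [arcCost]
      rw [hcost, harc, h1]
      have hq' : q (n + 1 + 1) = I (n + 1 + 1) + d (n + 1 + 1) - I (n + 1) := by linarith
      rw [hq']
      have : 0 ≤ h * ((n : ℝ) + 1 - i) * I (n + 1) :=
        mul_nonneg (mul_nonneg hh (by linarith)) hIn
      push_cast
      linarith


/-- The minimum total cost over all feasible plans of the Wagner–Whitin
lot-sizing problem equals the minimum, over all increasing sequences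
`1 = t_1 < t_2 < ⋯ < t_m = N + 1`, of `Σ_{l=1}^{m−1} ω(t_l, t_{l+1})`:
the lot-sizing problem is a shortest path problem on the acyclic network with
nodes `1, …, N + 1` and arc costs `ω`. -/
theorem lot_sizing_shortest_path (N : ℕ) (d : ℕ → ℝ)
    (hd : ∀ t ∈ Finset.Icc 1 N, 0 < d t)
    (K h v : ℝ) (hK : 0 ≤ K) (hh : 0 ≤ h) (hv : 0 ≤ v) :
    ∃ c : ℝ,
      IsLeast {c : ℝ | ∃ q I δ : ℕ → ℝ,
        FeasiblePlan N d q I δ ∧ planCost N K h v q I δ = c} c ∧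
      IsLeast {c : ℝ | ∃ (m : ℕ) (t : ℕ → ℕ),
        1 ≤ m ∧ t 1 = 1 ∧ t m = N + 1 ∧
        (∀ l, 1 ≤ l → l < m → t l < t (l + 1)) ∧
        ∑ l ∈ Finset.Icc 1 (m - 1), arcCost K h v d (t l) (t (l + 1)) = c} c := by
  obtain ⟨c, hc, hmin⟩ := Set.exists_min_image _ id (PathTo.finite K h v d N)
    (PathTo.exists_path K h v d N)
  refine ⟨c, ⟨?_, ?_⟩, ⟨?_, ?_⟩⟩
  · obtain ⟨q, I, δ, hf, _, hcost⟩ := PathTo.to_plan K h v d N c hc hd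
    exact ⟨q, I, δ, hf, hcost⟩
  · rintro _ ⟨q, I, δ, hf, rfl⟩
    rcases N with _ | n
    · have := hmin 0 PathTo.nil
      simpa [planCost] using this
    · obtain ⟨i, c', hin, hp, hle⟩ := plan_lower (n + 1) d hd K h v hh q I δ hf n le_rfl
      have h1 := hmin _ (PathTo.step i (n + 1) c' hp (by omega))
      have hI := (hf.2 (n + 1) (Finset.mem_Icc.2 (by omega))).2.1
      have hcast : (i : ℝ) ≤ n := by exact_mod_cast hin
      have : 0 ≤ (v + h * ((n : ℝ) + 1 - i)) * I (n + 1) :=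
        mul_nonneg (add_nonneg hv (mul_nonneg hh (by linarith))) hI
      simp only [id] at h1
      linarith
  · obtain ⟨m, t, h1, h2, h3, h4⟩ := PathTo.to_seq K h v d N c hc
    exact ⟨m + 1, t, by omega, h1, h2, h3, h4⟩
  · rintro _ ⟨m, t, hm, h1, h2, h3, rfl⟩
    obtain ⟨a, ha, hp⟩ := PathTo.of_seq K h v d m t h1 h3 (m - 1) (by omega)
    rw [show m - 1 + 1 = m by omega] at ha
    obtain rfl : a = N := by omega
    exact hmin _ hp
end
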